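/- arXiv:2307.00684 — 3 statements merged into one kernel-verified Lean document; each statement's English description precedes it below -/
import Mathlib

section
/- (Sufficient decrease, Lemma 3, main inequality) For every t, one step of the proximal network-slimming iteration satisfies F(Z^{t+1}) − F(Z^t) ≤ ((L − α)/2)·‖Z^{t+1} − Z^t‖₂². -/
noncomputable section

/-- Concatenation `W̃ = (W, γ)` of `W ∈ ℝⁿ` and `γ ∈ ℝᶜ` into a single Euclidean vector. -/
def pairWγ {n c : ℕ} (W : EuclideanSpace ℝ (Fin n)) (γ : EuclideanSpace ℝ (Fin c)) :
    EuclideanSpace ℝ (Fin n ⊕ Fin c) :=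
  (EuclideanSpace.equiv (Fin n ⊕ Fin c) ℝ).symm (Sum.elim (fun i => W i) (fun j => γ j))

/-- Partial gradient `∇_W L̃(W, γ)`. -/
def gradW {n c : ℕ} (Lt : EuclideanSpace ℝ (Fin n ⊕ Fin c) → ℝ)
    (W : EuclideanSpace ℝ (Fin n)) (γ : EuclideanSpace ℝ (Fin c)) : EuclideanSpace ℝ (Fin n) :=
  (EuclideanSpace.equiv (Fin n) ℝ).symm (fun i => gradient Lt (pairWγ W γ) (Sum.inl i))

/-- Partial gradient `∇_γ L̃(W, γ)`. -/
def gradG {n c : ℕ} (Lt : EuclideanSpace ℝ (Fin n ⊕ Fin c) → ℝ)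
    (W : EuclideanSpace ℝ (Fin n)) (γ : EuclideanSpace ℝ (Fin c)) : EuclideanSpace ℝ (Fin c) :=
  (EuclideanSpace.equiv (Fin c) ℝ).symm (fun j => gradient Lt (pairWγ W γ) (Sum.inr j))

/-- Soft-thresholding operator `(S(x, τ))_i = sign(x_i) · max{0, |x_i| − τ}`. -/
def softThresh {c : ℕ} (x : EuclideanSpace ℝ (Fin c)) (τ : ℝ) : EuclideanSpace ℝ (Fin c) :=
  (EuclideanSpace.equiv (Fin c) ℝ).symm (fun i => Real.sign (x i) * max 0 (|x i| - τ))

/-- The objective `F(W, γ, ξ) = L̃(W, γ) + λ‖ξ‖₁ + (β/2)‖γ − ξ‖₂²`. -/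
def objF {n c : ℕ} (Lt : EuclideanSpace ℝ (Fin n ⊕ Fin c) → ℝ) (lam β : ℝ)
    (W : EuclideanSpace ℝ (Fin n)) (γ ξ : EuclideanSpace ℝ (Fin c)) : ℝ :=
  Lt (pairWγ W γ) + lam * (∑ i, |ξ i|) + β / 2 * ‖γ - ξ‖ ^ 2

/-!
Write `d` for the increments of one step. The descent lemma bounds the change of `L̃` by
`⟪∇_W L̃, dW⟫ + ⟪∇_γ L̃, dγ⟫ + (L/2)(‖dW‖² + ‖dγ‖²)`. The updates say that `∇_W L̃ = -α dW`, that
`∇_γ L̃ = α (γ - γ') + β (ξ - γ')`, and that `α (ξ - ξ') + β (γ' - ξ')` is a subgradient of `λ‖·‖₁`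
at `ξ'`. The last two vectors have the same shape, so a single polarization identity turns both
pairings into differences of the coupling term `(β/2)‖γ - ξ‖²` minus `(α + β/2)‖d‖²`; the coupling
terms telescope.
-/

open scoped RealInnerProductSpace

section InnerProductSpace

variable {E : Type*} [NormedAddCommGroup E] [InnerProductSpace ℝ E]

theorem inner_smul_sub_add_smul_sub (a b : ℝ) (x y z : E) :
    ⟪a • (x - y) + b • (z - y), y - x⟫ =
      b / 2 * ‖z - x‖ ^ 2 - b / 2 * ‖z - y‖ ^ 2 - (a + b / 2) * ‖y - x‖ ^ 2 := by
  have polarization : ‖z - x‖ ^ 2 = ‖z - y‖ ^ 2 + 2 * ⟪z - y, y - x⟫ + ‖y - x‖ ^ 2 := by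
    rw [← norm_add_sq_real, sub_add_sub_cancel]
  rw [inner_add_left, real_inner_smul_left, real_inner_smul_left, ← neg_sub y x, inner_neg_left,
    real_inner_self_eq_norm_sq, polarization]
  ring

theorem inner_sub_of_gradient_step {α : ℝ} {g x y : E} (hα : α ≠ 0) (hy : y = x - (1 / α) • g) :
    ⟪g, y - x⟫ = -α * ‖y - x‖ ^ 2 := by
  have g_eq : g = -α • (y - x) := by
    rw [hy, sub_sub_cancel_left, neg_smul_neg, smul_smul, mul_one_div_cancel hα, one_smul]
  nth_rewrite 1 [g_eq]
  rw [real_inner_smul_left, real_inner_self_eq_norm_sq]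

theorem inner_sub_of_proximal_gradient_step {α β : ℝ} {g x y z : E} (hαβ : α + β ≠ 0)
    (hy : y = (1 / (α + β)) • (α • x + β • z) - (1 / (α + β)) • g) :
    ⟪g, y - x⟫ = β / 2 * ‖x - z‖ ^ 2 - β / 2 * ‖y - z‖ ^ 2 - (α + β / 2) * ‖y - x‖ ^ 2 := by
  have scaled : (α + β) • y = α • x + β • z - g := by
    rw [hy, ← smul_sub, smul_smul, mul_one_div_cancel hαβ, one_smul]
  have g_eq : g = α • (x - y) + β • (z - y) := by
    linear_combination (norm := module) scaled
  rw [g_eq, inner_smul_sub_add_smul_sub, norm_sub_rev z x, norm_sub_rev z y]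

variable [CompleteSpace E] {f : E → ℝ}

theorem hasDerivAt_comp_add_smul (hf : Differentiable ℝ f) (x d : E) (t : ℝ) :
    HasDerivAt (fun s : ℝ => f (x + s • d)) ⟪gradient f (x + t • d), d⟫ t := by
  have line : HasDerivAt (fun s : ℝ => x + s • d) d t := by
    simpa using ((hasDerivAt_id t).smul_const d).const_add x
  rw [inner_gradient_left]
  exact (hf (x + t • d)).hasFDerivAt.comp_hasDerivAt t line

theorem le_add_inner_gradient_add_norm_sq {L : ℝ} {x : E} (hf : Differentiable ℝ f)
    (hLip : ∀ y, ‖gradient f y - gradient f x‖ ≤ L * ‖y - x‖) (y : E) :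
    f y ≤ f x + ⟪gradient f x, y - x⟫ + L / 2 * ‖y - x‖ ^ 2 := by
  set d := y - x with hd
  have slope_le : ∀ t ∈ Set.Ico (0 : ℝ) 1,
      ⟪gradient f (x + t • d), d⟫ ≤ ⟪gradient f x, d⟫ + L * ‖d‖ ^ 2 * t := fun t ht =>
    calc ⟪gradient f (x + t • d), d⟫
        = ⟪gradient f x, d⟫ + ⟪gradient f (x + t • d) - gradient f x, d⟫ := by
          rw [inner_sub_left, add_sub_cancel]
      _ ≤ ⟪gradient f x, d⟫ + ‖gradient f (x + t • d) - gradient f x‖ * ‖d‖ := by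
          gcongr
          exact real_inner_le_norm _ _
      _ ≤ ⟪gradient f x, d⟫ + L * ‖x + t • d - x‖ * ‖d‖ := by
          gcongr
          exact hLip _
      _ = ⟪gradient f x, d⟫ + L * ‖d‖ ^ 2 * t := by
          rw [add_sub_cancel_left, norm_smul, Real.norm_of_nonneg ht.1]
          ring
  have quadratic_deriv (t : ℝ) :
      HasDerivAt (fun s : ℝ => f x + s * ⟪gradient f x, d⟫ + L / 2 * ‖d‖ ^ 2 * s ^ 2)
        (⟪gradient f x, d⟫ + L * ‖d‖ ^ 2 * t) t := by
    refine ((((hasDerivAt_id t).mul_const _).const_add _).add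
      (((hasDerivAt_id t).pow 2).const_mul _)).congr_deriv ?_
    simp only [id, Nat.cast_ofNat, Nat.add_one_sub_one, pow_one]
    ring
  have le_quadratic := image_le_of_deriv_right_le_deriv_boundary
    (fun t _ => (hasDerivAt_comp_add_smul hf x d t).continuousAt.continuousWithinAt)
    (fun t _ => (hasDerivAt_comp_add_smul hf x d t).hasDerivWithinAt)
    (by simp)
    (fun t _ => (quadratic_deriv t).continuousAt.continuousWithinAt)
    (fun t _ => (quadratic_deriv t).hasDerivWithinAt)
    slope_le (Set.right_mem_Icc.2 zero_le_one)
  simpa [hd] using le_quadratic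

end InnerProductSpace

section SoftThresholding

variable {c : ℕ} {x : EuclideanSpace ℝ (Fin c)} {τ : ℝ} {i : Fin c}

theorem softThresh_apply : softThresh x τ i = Real.sign (x i) * max 0 (|x i| - τ) := rfl

theorem softThresh_apply_of_abs_le (h : |x i| ≤ τ) : softThresh x τ i = 0 := by
  rw [softThresh_apply, max_eq_left (sub_nonpos.2 h), mul_zero]

theorem softThresh_apply_of_lt_neg (hτ : 0 ≤ τ) (h : x i < -τ) : softThresh x τ i = x i + τ := by
  have hx : x i < 0 := by linarith
  rw [softThresh_apply, Real.sign_of_neg hx, abs_of_neg hx, max_eq_right (by linarith)]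
  ring

theorem softThresh_apply_of_lt (hτ : 0 ≤ τ) (h : τ < x i) : softThresh x τ i = x i - τ := by
  have hx : 0 < x i := hτ.trans_lt h
  rw [softThresh_apply, Real.sign_of_pos hx, abs_of_pos hx, max_eq_right (by linarith), one_mul]

theorem mul_abs_softThresh_apply_add_le (hτ : 0 ≤ τ) (y : ℝ) :
    τ * |softThresh x τ i| + (x i - softThresh x τ i) * (y - softThresh x τ i) ≤ τ * |y| := by
  rcases le_or_gt |x i| τ with small | large
  · rw [softThresh_apply_of_abs_le small, abs_zero, mul_zero, zero_add, sub_zero, sub_zero]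
    calc x i * y ≤ |x i| * |y| := (le_abs_self _).trans_eq (abs_mul _ _)
      _ ≤ τ * |y| := by gcongr
  rcases lt_abs.1 large with pos | neg
  · rw [softThresh_apply_of_lt hτ pos, abs_of_pos (sub_pos.2 pos)]
    linarith [mul_le_mul_of_nonneg_left (le_abs_self y) hτ]
  · rw [softThresh_apply_of_lt_neg hτ (by linarith), abs_of_neg (by linarith)]
    linarith [mul_le_mul_of_nonneg_left (neg_le_abs y) hτ]

theorem mul_sum_abs_softThresh_add_inner_le (hτ : 0 ≤ τ) (x y : EuclideanSpace ℝ (Fin c)) :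
    τ * ∑ i, |softThresh x τ i| + ⟪x - softThresh x τ, y - softThresh x τ⟫ ≤ τ * ∑ i, |y i| := by
  simp only [PiLp.inner_apply, PiLp.sub_apply, Finset.mul_sum, ← Finset.sum_add_distrib,
    RCLike.inner_apply, conj_trivial]
  gcongr with i
  rw [mul_comm (y i - _)]
  exact mul_abs_softThresh_apply_add_le hτ (y i)

end SoftThresholding

section Concatenation

variable {n c : ℕ} (W W' : EuclideanSpace ℝ (Fin n)) (γ γ' : EuclideanSpace ℝ (Fin c))

theorem norm_pairWγ_sub_pairWγ_sq :
    ‖pairWγ W' γ' - pairWγ W γ‖ ^ 2 = ‖W' - W‖ ^ 2 + ‖γ' - γ‖ ^ 2 := by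
  simp [EuclideanSpace.real_norm_sq_eq, pairWγ]

theorem inner_gradient_pairWγ_sub_pairWγ (Lt : EuclideanSpace ℝ (Fin n ⊕ Fin c) → ℝ) :
    ⟪gradient Lt (pairWγ W γ), pairWγ W' γ' - pairWγ W γ⟫ =
      ⟪gradW Lt W γ, W' - W⟫ + ⟪gradG Lt W γ, γ' - γ⟫ := by
  rw [PiLp.inner_apply, Fintype.sum_sum_type]
  simp [PiLp.inner_apply, pairWγ, gradW, gradG]

end Concatenation

section ProximalSlimming

variable {n c : ℕ} {L lam α β : ℝ} {Lt : EuclideanSpace ℝ (Fin n ⊕ Fin c) → ℝ}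
  {W W' : EuclideanSpace ℝ (Fin n)} {γ γ' ξ ξ' : EuclideanSpace ℝ (Fin c)}

theorem mul_sum_abs_add_norm_sq_le_of_softThresh_step (hαβ : 0 < α + β) (hlam : 0 ≤ lam)
    (hξ : ξ' = softThresh ((1 / (α + β)) • (α • ξ + β • γ)) (lam / (α + β))) :
    lam * ∑ i, |ξ' i| + β / 2 * ‖γ - ξ'‖ ^ 2 + (α + β / 2) * ‖ξ' - ξ‖ ^ 2 ≤
      lam * ∑ i, |ξ i| + β / 2 * ‖γ - ξ‖ ^ 2 := by
  set x := (1 / (α + β)) • (α • ξ + β • γ) with hx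
  have subgradient_eq : (α + β) • (x - ξ') = α • (ξ - ξ') + β • (γ - ξ') := by
    rw [smul_sub, hx, smul_smul, mul_one_div_cancel hαβ.ne', one_smul]
    module
  have variational : lam * ∑ i, |ξ' i| + ⟪(α + β) • (x - ξ'), ξ - ξ'⟫ ≤ lam * ∑ i, |ξ i| := by
    have h := mul_le_mul_of_nonneg_left
      (mul_sum_abs_softThresh_add_inner_le (div_nonneg hlam hαβ.le) x ξ) hαβ.le
    rwa [← hξ, mul_add, ← mul_assoc, ← mul_assoc, mul_div_cancel₀ _ hαβ.ne',
      ← real_inner_smul_left] at h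
  rw [subgradient_eq, ← neg_sub ξ' ξ, inner_neg_right, neg_sub ξ' ξ,
    inner_smul_sub_add_smul_sub] at variational
  linarith

theorem sufficient_decrease_general (hα : α ≠ 0) (hαβ : 0 < α + β) (hlam : 0 ≤ lam)
    (hdiff : Differentiable ℝ Lt)
    (hLip : ∀ y, ‖gradient Lt y - gradient Lt (pairWγ W γ)‖ ≤ L * ‖y - pairWγ W γ‖)
    (hW : W' = W - (1 / α) • gradW Lt W γ)
    (hγ : γ' = (1 / (α + β)) • (α • γ + β • ξ) - (1 / (α + β)) • gradG Lt W γ)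
    (hξ : ξ' = softThresh ((1 / (α + β)) • (α • ξ + β • γ')) (lam / (α + β))) :
    objF Lt lam β W' γ' ξ' - objF Lt lam β W γ ξ ≤
      (L / 2 - α) * ‖W' - W‖ ^ 2 + ((L - β) / 2 - α) * ‖γ' - γ‖ ^ 2 -
        (α + β / 2) * ‖ξ' - ξ‖ ^ 2 := by
  have smooth_descent := le_add_inner_gradient_add_norm_sq hdiff hLip (pairWγ W' γ')
  rw [inner_gradient_pairWγ_sub_pairWγ, norm_pairWγ_sub_pairWγ_sq, inner_sub_of_gradient_step hα hW,
    inner_sub_of_proximal_gradient_step hαβ.ne' hγ] at smooth_descent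
  have shrinkage_descent := mul_sum_abs_add_norm_sq_le_of_softThresh_step hαβ hlam hξ
  unfold objF
  linarith

end ProximalSlimming

/-- (Sufficient decrease, Lemma 3, main inequality.) -/
theorem sufficient_decrease
    (n c : ℕ) (hn : 0 < n) (hc : 0 < c)
    (L lam α β : ℝ) (hL : 0 < L) (hlam : 0 < lam) (hα : 0 < α) (hβ : 0 < β)
    (Lt : EuclideanSpace ℝ (Fin n ⊕ Fin c) → ℝ)
    (hdiff : Differentiable ℝ Lt)
    (hnonneg : ∀ x, 0 ≤ Lt x)
    (hLip : ∀ x y, ‖gradient Lt x - gradient Lt y‖ ≤ L * ‖x - y‖)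
    (W : ℕ → EuclideanSpace ℝ (Fin n)) (γ ξ : ℕ → EuclideanSpace ℝ (Fin c))
    (hW : ∀ t, W (t + 1) = W t - (1 / α) • gradW Lt (W t) (γ t))
    (hγ : ∀ t, γ (t + 1) =
      (1 / (α + β)) • (α • γ t + β • ξ t) - (1 / (α + β)) • gradG Lt (W t) (γ t))
    (hξ : ∀ t, ξ (t + 1) =
      softThresh ((1 / (α + β)) • (α • ξ t + β • γ (t + 1))) (lam / (α + β))) :
    ∀ t : ℕ,
      objF Lt lam β (W (t + 1)) (γ (t + 1)) (ξ (t + 1)) - objF Lt lam β (W t) (γ t) (ξ t) ≤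
        (L - α) / 2 *
          (‖W (t + 1) - W t‖ ^ 2 + ‖γ (t + 1) - γ t‖ ^ 2 + ‖ξ (t + 1) - ξ t‖ ^ 2) := by
  refine fun t => (sufficient_decrease_general hα.ne' (add_pos hα hβ) hlam.le hdiff
    (fun y => hLip y _) (hW t) (hγ t) (hξ t)).trans ?_
  rw [mul_add, mul_add, sub_eq_add_neg, ← neg_mul]
  gcongr <;> linarith
end
end

section
/- (Relative error, Lemma 4, explicit bound) For every t, define w₁ = ∇_W L̃(W^{t+1}, γ^{t+1}) − ∇_W L̃(W^t, γ^t) − α(W^{t+1} − W^t), w₂ = ∇_γ L̃(W^{t+1}, γ^{t+1}) − ∇_γ L̃(W^t, γ^t) − α(γ^{t+1} − γ^t) − β(ξ^{t+1} − ξ^t), and w₃ = −α(ξ^{t+1} − ξ^t). Then ‖w₁‖₂ + ‖w₂‖₂ + ‖w₃‖₂ ≤ (3α + 2L + β)·‖Z^{t+1} − Z^t‖₂. -/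
noncomputable section

/-!
Write `x = (W, γ)`. The vector `v = ∇L̃(x') - ∇L̃(x) - α (x' - x)` has norm at most
`(L + α) ‖x' - x‖`, and `w₁ = v_W`, `w₂ = v_γ - β (ξ' - ξ)`, `w₃ = -α (ξ' - ξ)`. A block is never
longer than the whole vector, so the three norms sum to at most
`2 (L + α) ‖x' - x‖ + (α + β) ‖ξ' - ξ‖ ≤ (3 α + 2 L + β) ‖Z' - Z‖`.
-/

open WithLp
open scoped NNReal ENNReal

theorem norm_map_sub_sub_smul_sub_le {V : Type*} [SeminormedAddCommGroup V] [NormedSpace ℝ V]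
    {K : ℝ≥0} {G : V → V} (hG : LipschitzWith K G) {α : ℝ} (hα : 0 ≤ α) (x y : V) :
    ‖G y - G x - α • (y - x)‖ ≤ (K + α) * ‖y - x‖ :=
  calc ‖G y - G x - α • (y - x)‖
      ≤ ‖G y - G x‖ + ‖α • (y - x)‖ := norm_sub_le _ _
    _ ≤ K * ‖y - x‖ + α * ‖y - x‖ := by
        rw [norm_smul_of_nonneg hα]
        gcongr
        exact hG.norm_sub_le y x
    _ = (K + α) * ‖y - x‖ := by ring

theorem prod_prod_norm_eq_of_L2 {E F H : Type*} [SeminormedAddCommGroup E]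
    [SeminormedAddCommGroup F] [SeminormedAddCommGroup H] (z : WithLp 2 (WithLp 2 (E × F) × H)) :
    ‖z‖ = √(‖z.fst.fst‖ ^ 2 + ‖z.fst.snd‖ ^ 2 + ‖z.snd‖ ^ 2) := by
  rw [prod_norm_eq_of_L2, prod_norm_sq_eq_of_L2]

/-- The gradient `(∇_W L̃, ∇_γ L̃)` as a vector field on the `L²` product `ℝⁿ × ℝᶜ`, the counterpart
of `gradient Lt` on `ℝⁿ⁺ᶜ` whose two blocks are available as projections. -/
def blockGradient {n c : ℕ} (Lt : EuclideanSpace ℝ (Fin n ⊕ Fin c) → ℝ)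
    (x : WithLp 2 (EuclideanSpace ℝ (Fin n) × EuclideanSpace ℝ (Fin c))) :
    WithLp 2 (EuclideanSpace ℝ (Fin n) × EuclideanSpace ℝ (Fin c)) :=
  toLp 2 (gradW Lt x.fst x.snd, gradG Lt x.fst x.snd)

theorem blockGradient_eq_conj_gradient {n c : ℕ} (Lt : EuclideanSpace ℝ (Fin n ⊕ Fin c) → ℝ) :
    blockGradient Lt =
      PiLp.sumPiLpEquivProdLpPiLp (𝕜 := ℝ) 2 (fun _ : Fin n ⊕ Fin c => ℝ) ∘ gradient Lt ∘
        (PiLp.sumPiLpEquivProdLpPiLp (𝕜 := ℝ) 2 (fun _ : Fin n ⊕ Fin c => ℝ)).symm :=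
  rfl

theorem lipschitzWith_blockGradient {n c : ℕ} {Lt : EuclideanSpace ℝ (Fin n ⊕ Fin c) → ℝ}
    {K : ℝ≥0} (hLt : LipschitzWith K (gradient Lt)) : LipschitzWith K (blockGradient Lt) := by
  rw [blockGradient_eq_conj_gradient]
  simpa only [one_mul, mul_one] using
    (LinearIsometryEquiv.lipschitz _).comp (hLt.comp (LinearIsometryEquiv.lipschitz _))

theorem relative_error_bound_general {p : ℝ≥0∞} [Fact (1 ≤ p)]
    {E F : Type*} [SeminormedAddCommGroup E] [NormedSpace ℝ E]
    [SeminormedAddCommGroup F] [NormedSpace ℝ F]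
    {K : ℝ≥0} {G : WithLp p (E × F) → WithLp p (E × F)} (hG : LipschitzWith K G)
    {α β : ℝ} (hα : 0 ≤ α) (hβ : 0 ≤ β) (z z' : WithLp p (WithLp p (E × F) × F)) :
    ‖(G z'.fst).fst - (G z.fst).fst - α • (z'.fst.fst - z.fst.fst)‖ +
      ‖(G z'.fst).snd - (G z.fst).snd - α • (z'.fst.snd - z.fst.snd) - β • (z'.snd - z.snd)‖ +
      ‖(-α) • (z'.snd - z.snd)‖ ≤ (3 * α + 2 * K + β) * ‖z' - z‖ := by
  set v := G z'.fst - G z.fst - α • (z'.fst - z.fst)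
  set d := z'.snd - z.snd
  have norm_v_le : ‖v‖ ≤ (K + α) * ‖z' - z‖ :=
    (norm_map_sub_sub_smul_sub_le hG hα _ _).trans <| by
      gcongr
      exact WithLp.norm_fst_le _ (z' - z)
  have norm_d_le : ‖d‖ ≤ ‖z' - z‖ := WithLp.norm_snd_le _ (z' - z)
  calc ‖v.fst‖ + ‖v.snd - β • d‖ + ‖(-α) • d‖
      ≤ ‖v.fst‖ + (‖v.snd‖ + ‖β • d‖) + ‖(-α) • d‖ := by gcongr; exact norm_sub_le _ _
    _ = ‖v.fst‖ + (‖v.snd‖ + β * ‖d‖) + α * ‖d‖ := by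
        rw [neg_smul, norm_neg, norm_smul_of_nonneg hα, norm_smul_of_nonneg hβ]
    _ ≤ ‖v‖ + (‖v‖ + β * ‖d‖) + α * ‖d‖ := by
        gcongr
        exacts [WithLp.norm_fst_le _ v, WithLp.norm_snd_le _ v]
    _ ≤ (K + α) * ‖z' - z‖ + ((K + α) * ‖z' - z‖ + β * ‖z' - z‖) + α * ‖z' - z‖ := by gcongr
    _ = (3 * α + 2 * K + β) * ‖z' - z‖ := by ring

/-- (Relative error, Lemma 4, explicit bound.) -/
theorem relative_error_bound
    (n c : ℕ) (hn : 0 < n) (hc : 0 < c)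
    (L lam α β : ℝ) (hL : 0 < L) (hlam : 0 < lam) (hα : 0 < α) (hβ : 0 < β)
    (Lt : EuclideanSpace ℝ (Fin n ⊕ Fin c) → ℝ)
    (hdiff : Differentiable ℝ Lt)
    (hLip : ∀ x y, ‖gradient Lt x - gradient Lt y‖ ≤ L * ‖x - y‖)
    (W : ℕ → EuclideanSpace ℝ (Fin n)) (γ ξ : ℕ → EuclideanSpace ℝ (Fin c))
    (hW : ∀ t, W (t + 1) = W t - (1 / α) • gradW Lt (W t) (γ t))
    (hγ : ∀ t, γ (t + 1) =
      (1 / (α + β)) • (α • γ t + β • ξ t) - (1 / (α + β)) • gradG Lt (W t) (γ t))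
    (hξ : ∀ t, ξ (t + 1) =
      softThresh ((1 / (α + β)) • (α • ξ t + β • γ (t + 1))) (lam / (α + β))) :
    ∀ t : ℕ,
      ‖gradW Lt (W (t + 1)) (γ (t + 1)) - gradW Lt (W t) (γ t) - α • (W (t + 1) - W t)‖ +
      ‖gradG Lt (W (t + 1)) (γ (t + 1)) - gradG Lt (W t) (γ t) - α • (γ (t + 1) - γ t) -
        β • (ξ (t + 1) - ξ t)‖ +
      ‖(-α) • (ξ (t + 1) - ξ t)‖ ≤
      (3 * α + 2 * L + β) *
        Real.sqrt (‖W (t + 1) - W t‖ ^ 2 + ‖γ (t + 1) - γ t‖ ^ 2 + ‖ξ (t + 1) - ξ t‖ ^ 2) := by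
  intro t
  lift L to ℝ≥0 using hL.le
  have hG := lipschitzWith_blockGradient (lipschitzWith_iff_norm_sub_le.2 hLip)
  simpa only [prod_prod_norm_eq_of_L2, blockGradient, sub_fst, sub_snd, toLp_fst, toLp_snd] using
    relative_error_bound_general hG hα.le hβ.le (toLp 2 (toLp 2 (W t, γ t), ξ t))
      (toLp 2 (toLp 2 (W (t + 1), γ (t + 1)), ξ (t + 1)))
end
end

section
/- (Second sufficient decrease inequality, step (25)) For every t, with ξ^{t+1} = S((αξ^t + βγ^{t+1})/(α + β), λ/(α + β)) being the minimizer of ξ ↦ λ‖ξ‖₁ + (α/2)‖ξ − ξ^t‖₂² + (β/2)‖γ^{t+1} − ξ‖₂², it holds that F(W^{t+1}, γ^{t+1}, ξ^{t+1}) − F(W^{t+1}, γ^{t+1}, ξ^t) ≤ −(α/2)·‖ξ^{t+1} − ξ^t‖₂². -/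
noncomputable section

/-!
Soft-thresholding is the proximal map of `τ‖·‖₁`: coordinatewise, `x - S(x, τ)` is a subgradient of
`τ|·|` at `S(x, τ)`. Completing the square merges the two quadratic penalties into one of weight
`α + β` centred at `x = (αξ^t + βγ^{t+1})/(α + β)`, so the objective minimized by `ξ^{t+1}` grows by
at least `(α + β)/2 · ‖ξ - ξ^{t+1}‖²` away from it. The decrease is this growth at `ξ = ξ^t`.
-/

open scoped RealInnerProductSpace

/-- Scalar soft-thresholding, the coordinate function of `softThresh`. -/
def softThreshReal (x τ : ℝ) : ℝ :=
  Real.sign x * max 0 (|x| - τ)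

section Scalar

variable {x τ : ℝ}

lemma softThreshReal_of_abs_le (h : |x| ≤ τ) : softThreshReal x τ = 0 := by
  rw [softThreshReal, max_eq_left (sub_nonpos.2 h), mul_zero]

lemma softThreshReal_of_le (hτ : 0 ≤ τ) (h : τ ≤ x) : softThreshReal x τ = x - τ := by
  rcases (hτ.trans h).eq_or_lt with rfl | hx
  · simp [softThreshReal, le_antisymm h hτ]
  · rw [softThreshReal, Real.sign_of_pos hx, abs_of_pos hx, max_eq_right (sub_nonneg.2 h), one_mul]

lemma softThreshReal_neg (x τ : ℝ) : softThreshReal (-x) τ = -softThreshReal x τ := by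
  rw [softThreshReal, softThreshReal, Real.sign_neg, abs_neg, neg_mul]

lemma softThreshReal_of_le_neg (hτ : 0 ≤ τ) (h : x ≤ -τ) : softThreshReal x τ = x + τ := by
  have h_neg := softThreshReal_of_le hτ (le_neg_of_le_neg h)
  rw [softThreshReal_neg] at h_neg
  linarith

lemma softThreshReal_subgradient (hτ : 0 ≤ τ) (x y : ℝ) :
    τ * |softThreshReal x τ| + (x - softThreshReal x τ) * (y - softThreshReal x τ) ≤ τ * |y| := by
  rcases le_total |x| τ with h_small | h_large
  · rw [softThreshReal_of_abs_le h_small, abs_zero, mul_zero, zero_add, sub_zero, sub_zero]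
    calc x * y ≤ |x| * |y| := (le_abs_self _).trans_eq (abs_mul x y)
      _ ≤ τ * |y| := by gcongr
  rcases le_abs.1 h_large with h_pos | h_neg
  · rw [softThreshReal_of_le hτ h_pos, abs_of_nonneg (sub_nonneg.2 h_pos)]
    calc τ * (x - τ) + (x - (x - τ)) * (y - (x - τ)) = τ * y := by ring
      _ ≤ τ * |y| := by gcongr; exact le_abs_self y
  · have h_neg : x ≤ -τ := le_neg_of_le_neg h_neg
    rw [softThreshReal_of_le_neg hτ h_neg, abs_of_nonpos (by linarith)]
    calc τ * -(x + τ) + (x - (x + τ)) * (y - (x + τ)) = τ * -y := by ring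
      _ ≤ τ * |y| := by gcongr; exact neg_le_abs y

end Scalar

lemma softThresh_apply_s12 {c : ℕ} (x : EuclideanSpace ℝ (Fin c)) (τ : ℝ) (i : Fin c) :
    softThresh x τ i = softThreshReal (x i) τ :=
  rfl

lemma softThresh_subgradient {c : ℕ} {τ : ℝ} (hτ : 0 ≤ τ) (x y : EuclideanSpace ℝ (Fin c)) :
    τ * ∑ i, |softThresh x τ i| + ⟪x - softThresh x τ, y - softThresh x τ⟫ ≤ τ * ∑ i, |y i| := by
  simp only [PiLp.inner_apply, PiLp.sub_apply, softThresh_apply_s12, Real.inner_apply,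
    Finset.mul_sum, ← Finset.sum_add_distrib]
  exact Finset.sum_le_sum fun i _ ↦ softThreshReal_subgradient hτ (x i) (y i)

lemma weighted_sq_dist_expansion {E : Type*} [NormedAddCommGroup E] [InnerProductSpace ℝ E]
    {α β : ℝ} (hαβ : α + β ≠ 0) (u g s y : E) :
    α / 2 * ‖y - u‖ ^ 2 + β / 2 * ‖g - y‖ ^ 2 =
      α / 2 * ‖s - u‖ ^ 2 + β / 2 * ‖g - s‖ ^ 2
        - (α + β) * ⟪(1 / (α + β)) • (α • u + β • g) - s, y - s⟫
        + (α + β) / 2 * ‖y - s‖ ^ 2 := by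
  have h_u : ‖y - u‖ ^ 2 = ‖y - s‖ ^ 2 - 2 * ⟪u - s, y - s⟫ + ‖s - u‖ ^ 2 := by
    rw [← sub_sub_sub_cancel_right y u s, norm_sub_sq_real, real_inner_comm, norm_sub_rev u s]
  have h_g : ‖g - y‖ ^ 2 = ‖g - s‖ ^ 2 - 2 * ⟪g - s, y - s⟫ + ‖y - s‖ ^ 2 := by
    rw [← sub_sub_sub_cancel_right g y s, norm_sub_sq_real]
  have h_center : (α + β) • ((1 / (α + β)) • (α • u + β • g) - s) =
      α • (u - s) + β • (g - s) := by
    rw [smul_sub, smul_smul, mul_one_div_cancel hαβ]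
    module
  have h_inner : (α + β) * ⟪(1 / (α + β)) • (α • u + β • g) - s, y - s⟫ =
      α * ⟪u - s, y - s⟫ + β * ⟪g - s, y - s⟫ := by
    rw [← real_inner_smul_left, h_center, inner_add_left, real_inner_smul_left,
      real_inner_smul_left]
  rw [h_u, h_g, h_inner]
  ring

lemma softThresh_quadratic_growth {c : ℕ} {lam α β : ℝ} (hlam : 0 ≤ lam) (hαβ : 0 < α + β)
    (u g y : EuclideanSpace ℝ (Fin c)) :
    let s := softThresh ((1 / (α + β)) • (α • u + β • g)) (lam / (α + β))
    lam * ∑ i, |s i| + α / 2 * ‖s - u‖ ^ 2 + β / 2 * ‖g - s‖ ^ 2 + (α + β) / 2 * ‖y - s‖ ^ 2 ≤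
      lam * ∑ i, |y i| + α / 2 * ‖y - u‖ ^ 2 + β / 2 * ‖g - y‖ ^ 2 := by
  intro s
  have h_subgradient : lam * ∑ i, |s i|
      + (α + β) * ⟪(1 / (α + β)) • (α • u + β • g) - s, y - s⟫ ≤ lam * ∑ i, |y i| := by
    have h_scaled := mul_le_mul_of_nonneg_left
      (softThresh_subgradient (div_nonneg hlam hαβ.le) ((1 / (α + β)) • (α • u + β • g)) y) hαβ.le
    rwa [mul_add, ← mul_assoc, ← mul_assoc, mul_div_cancel₀ lam hαβ.ne'] at h_scaled
  linarith [weighted_sq_dist_expansion hαβ.ne' u g s y]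

theorem second_sufficient_decrease_general {𝓦 : Type*} {c : ℕ}
    (Lt : 𝓦 → EuclideanSpace ℝ (Fin c) → ℝ) {lam α β : ℝ} (hlam : 0 ≤ lam) (hαβ : 0 < α + β)
    (W : 𝓦) (γ ξ : EuclideanSpace ℝ (Fin c)) :
    let F : 𝓦 → EuclideanSpace ℝ (Fin c) → EuclideanSpace ℝ (Fin c) → ℝ := fun W γ ξ =>
      Lt W γ + lam * (∑ i, |ξ i|) + β / 2 * ‖γ - ξ‖ ^ 2
    let ξ' := softThresh ((1 / (α + β)) • (α • ξ + β • γ)) (lam / (α + β))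
    F W γ ξ' - F W γ ξ ≤ -(α + β / 2) * ‖ξ' - ξ‖ ^ 2 := by
  intro F ξ'
  have h_growth : lam * ∑ i, |ξ' i| + α / 2 * ‖ξ' - ξ‖ ^ 2 + β / 2 * ‖γ - ξ'‖ ^ 2
      + (α + β) / 2 * ‖ξ - ξ'‖ ^ 2 ≤
      lam * ∑ i, |ξ i| + α / 2 * ‖ξ - ξ‖ ^ 2 + β / 2 * ‖γ - ξ‖ ^ 2 :=
    softThresh_quadratic_growth hlam hαβ ξ γ ξ
  rw [sub_self, norm_zero, norm_sub_rev ξ ξ'] at h_growth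
  simp only [F]
  linarith

/-- (Second sufficient decrease inequality, step (25).) -/
theorem second_sufficient_decrease
    (n c : ℕ) (hn : 0 < n) (hc : 0 < c)
    (Lt : EuclideanSpace ℝ (Fin n) → EuclideanSpace ℝ (Fin c) → ℝ)
    (lam α β : ℝ) (hlam : 0 < lam) (hα : 0 < α) (hβ : 0 < β)
    (Wt1 : EuclideanSpace ℝ (Fin n)) (γt1 ξt : EuclideanSpace ℝ (Fin c)) :
    let F : EuclideanSpace ℝ (Fin n) → EuclideanSpace ℝ (Fin c) →
        EuclideanSpace ℝ (Fin c) → ℝ := fun W γ ξ =>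
      Lt W γ + lam * (∑ i, |ξ i|) + β / 2 * ‖γ - ξ‖ ^ 2
    let ξt1 : EuclideanSpace ℝ (Fin c) :=
      softThresh ((1 / (α + β)) • (α • ξt + β • γt1)) (lam / (α + β))
    F Wt1 γt1 ξt1 - F Wt1 γt1 ξt ≤ -(α / 2) * ‖ξt1 - ξt‖ ^ 2 := by
  exact (second_sufficient_decrease_general Lt hlam.le (add_pos hα hβ) Wt1 γt1 ξt).trans
    (mul_le_mul_of_nonneg_right (by linarith) (sq_nonneg _))
end
end
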